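/- Let K ≥ 2 and let 0 = h_1 < h_2 < ... < h_K be the possible channel-gain magnitudes, let 0 < g_min ≤ g_max be reals, let η ∈ (0,1), and let N : {h_1,...,h_K} × [0, g_max] → [0,∞) satisfy: N(h_1, g) = 0 and N(h_k, 0) = 0 for all k and g; for each k ≥ 2, N(h_k, ·) is strictly increasing, continuous, and strictly convex on [0, g_max]; and N(h_k, g) ≤ N(h_{k'}, g) whenever k ≤ k'. For each number of users n and each user i ∈ {1,...,n}, let π_i be a probability mass function on {h_1,...,h_K} with π_i(h_1) < 1 − η, and let Ḡ_i satisfy g_min ≤ Ḡ_i and 0 < Ḡ_i < g_max · Σ_{k≥2} π_i(h_k). Then there exists a positive integer N* depending only on η, g_min, g_max and the function N (not on n, the π_i's or the Ḡ_i's) such that for every n ≥ N*, the product policy (F*_1, ..., F*_n) — where for user i, τ_i is the unique index with g_max·Σ_{k>τ_i} π_i(h_k) ≤ Ḡ_i < g_max·Σ_{k≥τ_i} π_i(h_k), F*_{i,k} is the Dirac measure at g_max for k > τ_i, F*_{i,k} is the Dirac measure at 0 for k < τ_i, and F*_{i,τ_i} = w_i·δ_{g_max} + (1 − w_i)·δ_0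 with w_i = (Ḡ_i − g_max·Σ_{k>τ_i} π_i(h_k))/(g_max·π_i(h_{τ_i})) — maximizes the objective T(F_1,...,F_n) = Σ_{(k_1,...,k_n)} Π_i π_i(h_{k_i}) ∫...∫ (1/2)·ln(1 + Σ_{i=1}^n N(h_{k_i}, g_i)) dF_{1,k_1}(g_1)...dF_{n,k_n}(g_n) over all feasible policies, i.e., over all families (F_{i,k})_{i≤n, k≤K} of Borel probability measures on [0, g_max] satisfying the per-user power constraints Σ_{k=1}^K π_i(h_k) ∫_0^{g_max} g dF_{i,k}(g) ≤ Ḡ_i for every i. -/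

import Mathlib

open MeasureTheory Finset

namespace InvPol
open Filter Topology

lemma log_chord_pt {a t x y M c : ℝ} (ha : 0 < a) (ht0 : 0 ≤ t) (ht1 : t ≤ 1) (hx : 0 ≤ x)
    (hy : 0 ≤ y) (hyM : y ≤ M) (hc : 0 ≤ c) (hxy : x ≤ t * y - c * (t * (1 - t))) :
    Real.log (a + x) ≤ (1 - t) * Real.log a + t * Real.log (a + y)
      + t * (1 - t) * (M ^ 2 * (1 / a ^ 2) - c * (1 / (a + M))) := by
  have key : ∀ u v : ℝ, 0 < u → 0 < v → Real.log u ≤ Real.log v + (u - v) / v := by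
    intro u v hu hv
    have h1 := Real.log_le_sub_one_of_pos (div_pos hu hv)
    rw [Real.log_div hu.ne' hv.ne'] at h1
    have : (u - v) / v = u / v - 1 := by field_simp
    linarith
  have hs : 0 ≤ t * (1 - t) := mul_nonneg ht0 (by linarith)
  have hty : 0 ≤ t * y := mul_nonneg ht0 hy
  have hv : 0 < a + t * y := by linarith
  have h1 := key (a + x) (a + t * y) (by linarith) hv
  have h2 := key (a + t * y) a hv ha
  have h3 := key (a + t * y) (a + y) hv (by linarith)
  have h4 : (a + x - (a + t * y)) / (a + t * y) ≤ - (c * (t * (1 - t))) * (1 / (a + M)) := by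
    have e1 : (a + x - (a + t * y)) / (a + t * y) ≤ - (c * (t * (1 - t))) / (a + t * y) := by
      gcongr; linarith
    have e2 : (c * (t * (1 - t))) / (a + M) ≤ (c * (t * (1 - t))) / (a + t * y) := by
      gcongr
      nlinarith
    have e3 : - (c * (t * (1 - t))) / (a + t * y) = - ((c * (t * (1 - t))) / (a + t * y)) := by ring
    have e4 : - (c * (t * (1 - t))) * (1 / (a + M)) = - ((c * (t * (1 - t))) / (a + M)) := by ring
    linarith
  have h5 : y * (1 / a - 1 / (a + y)) ≤ M ^ 2 * (1 / a ^ 2) := by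
    have hay : 0 < a + y := by linarith
    have e1 : y * (1 / a - 1 / (a + y)) = y ^ 2 * (1 / (a * (a + y))) := by
      field_simp; ring
    rw [e1]
    have : y ^ 2 ≤ M ^ 2 := by gcongr
    have : 1 / (a * (a + y)) ≤ 1 / a ^ 2 := by
      apply one_div_le_one_div_of_le (by positivity)
      nlinarith
    gcongr
  have h6 := mul_le_mul_of_nonneg_left h2 (by linarith : 0 ≤ 1 - t)
  have h7 := mul_le_mul_of_nonneg_left h3 ht0
  have h8 := mul_le_mul_of_nonneg_left h5 hs
  have e5 : (1 - t) * ((a + t * y - a) / a) + t * ((a + t * y - (a + y)) / (a + y))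
     = t * (1 - t) * (y * (1 / a - 1 / (a + y))) := by ring
  linarith

lemma log_div_lower {a x : ℝ} (ha : 1 ≤ a) (hx : 0 ≤ x) :
    Real.log (1 + x) * (1 / a) ≤ Real.log (a + x) - Real.log a := by
  have h0 : 0 < a := by linarith
  rw [← Real.log_div (by linarith) h0.ne']
  have h1 : 1 + x ≤ ((a + x) / a) ^ a := by
    have := one_add_mul_self_le_rpow_one_add (s := x / a) (by have : 0 ≤ x / a := by positivity
                                                              linarith) ha
    have e : 1 + a * (x / a) = 1 + x := by field_simp
    have e2 : 1 + x / a = (a + x) / a := by field_simp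
    rw [e, e2] at this
    exact this
  have h2 := Real.log_le_log (by linarith) h1
  rw [Real.log_rpow (by positivity)] at h2
  rw [mul_one_div, div_le_iff₀ h0]
  linarith

lemma log_div_upper {a x : ℝ} (ha : 0 < a) (hx : 0 ≤ x) :
    Real.log (a + x) - Real.log a ≤ x * (1 / a) := by
  rw [← Real.log_div (by linarith) ha.ne']
  have h1 := Real.log_le_sub_one_of_pos (div_pos (by linarith : 0 < a + x) ha)
  have : (a + x) / a - 1 = x * (1 / a) := by field_simp; ring
  linarith

lemma inv_sq_bound {b s : ℝ} (hb : 0 < b) (hs : 0 ≤ s) :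
    1 / (1 + s) ^ 2 ≤ 1 / b ^ 2 + Real.exp b * Real.exp (-s) := by
  rw [← Real.exp_add]
  rcases le_total b (1 + s) with h | h
  · have : 1 / (1 + s) ^ 2 ≤ 1 / b ^ 2 := by gcongr
    have := Real.exp_pos (b + -s)
    linarith
  · have h1 : 1 / (1 + s) ^ 2 ≤ 1 := by
      rw [div_le_one (by positivity)]; nlinarith
    have h2 : 1 ≤ Real.exp (b + -s) := by
      rw [Real.one_le_exp_iff]; linarith
    have : 0 ≤ 1 / b ^ 2 := by positivity
    linarith

lemma exp_chord {M x : ℝ} (hM : 0 < M) (hx0 : 0 ≤ x) (hx : x ≤ M) :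
    Real.exp (-x) ≤ 1 - (1 - Real.exp (-M)) / M * x := by
  have h := convexOn_exp.2 (Set.mem_univ 0) (Set.mem_univ (-M))
    (show 0 ≤ 1 - x / M by rw [sub_nonneg, div_le_one hM]; exact hx) (show 0 ≤ x / M by positivity)
    (by ring)
  simp only [smul_eq_mul, mul_zero, zero_add, Real.exp_zero] at h
  have e : x / M * -M = -x := by field_simp
  rw [e] at h
  refine h.trans (le_of_eq ?_)
  ring

lemma eventually_bound (M c θ : ℝ) (hM : 0 < M) (hc : 0 < c) (hθ : 0 < θ) :
    ∃ m0 : ℕ, 0 < m0 ∧ ∀ m : ℕ, m0 ≤ m →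
      M ^ 2 * (1 / (θ * m) ^ 2 + Real.exp (-(θ * m))) ≤ c * (1 / (1 + m * M + M)) := by
  have h1 : Tendsto (fun m : ℕ => M ^ 2 * ((1 + m * M + M) * (1 / (θ * m) ^ 2)
      + (1 + m * M + M) * Real.exp (-(θ * m)))) atTop (𝓝 (M^2 * (0 + 0))) := by
    have hinv : Tendsto (fun m : ℕ => ((m : ℝ))⁻¹) atTop (𝓝 0) :=
      tendsto_inv_atTop_zero.comp tendsto_natCast_atTop_atTop
    have hid : Tendsto (fun m : ℕ => (θ * m : ℝ)) atTop atTop :=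
      tendsto_natCast_atTop_atTop.const_mul_atTop hθ
    refine Tendsto.const_mul _ (Tendsto.add ?_ ?_)
    · have : Tendsto (fun m : ℕ => ((1 + M) * ((m:ℝ)⁻¹ * (m:ℝ)⁻¹) + M * (m:ℝ)⁻¹) / θ ^ 2) atTop
          (𝓝 (((1 + M) * (0 * 0) + M * 0) / θ ^ 2)) :=
        (((hinv.mul hinv).const_mul _).add (hinv.const_mul _)).div_const _
      simp only [mul_zero, add_zero, zero_div] at this
      refine this.congr' ?_
      filter_upwards [eventually_gt_atTop 0] with m hm
      have : (m : ℝ) ≠ 0 := by positivity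
      field_simp
      ring
    · have e0 : Tendsto (fun m : ℕ => Real.exp (-(θ * m))) atTop (𝓝 0) :=
        (Real.tendsto_exp_neg_atTop_nhds_zero).comp hid
      have e1 : Tendsto (fun m : ℕ => (θ * m) ^ 1 * Real.exp (-(θ * m))) atTop (𝓝 0) :=
        (Real.tendsto_pow_mul_exp_neg_atTop_nhds_zero 1).comp hid
      have := (e0.const_mul (1 + M)).add (e1.const_mul (M / θ))
      simp only [mul_zero, add_zero] at this
      refine this.congr ?_
      intro m
      field_simp
      ring
  simp only [add_zero, mul_zero] at h1
  obtain ⟨m1, hm1⟩ := eventually_atTop.1 (h1.eventually_lt_const hc)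
  refine ⟨m1 + 1, by omega, fun m hm => ?_⟩
  have := hm1 m (by omega)
  rw [mul_one_div, le_div_iff₀ (by positivity)]
  nlinarith

noncomputable def Vv {n : ℕ} (ρ : Fin n → ProbabilityMeasure ℝ) : ℝ :=
  ∫ x : Fin n → ℝ, (1 / 2) * Real.log (1 + ∑ i, x i) ∂(Measure.pi fun i => (ρ i : Measure ℝ))

noncomputable def Ph {m : ℕ} (σ : Fin m → ProbabilityMeasure ℝ) (x : ℝ) : ℝ :=
  ∫ y : Fin m → ℝ, (1 / 2) * Real.log (1 + x + ∑ i, y i) ∂(Measure.pi fun i => (σ i : Measure ℝ))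

lemma ae_pi_mem {n : ℕ} (ρ : Fin n → ProbabilityMeasure ℝ) (S : Set ℝ)
    (hρ : ∀ i, ∀ᵐ x ∂(ρ i : Measure ℝ), x ∈ S) :
    ∀ᵐ x ∂(Measure.pi fun i => (ρ i : Measure ℝ)), ∀ i, x i ∈ S :=
  ae_all_iff.2 fun i => Measure.tendsto_eval_ae_ae.eventually (hρ i)

lemma ae_pi_sum {n : ℕ} (ρ : Fin n → ProbabilityMeasure ℝ) (M : ℝ)
    (hρ : ∀ i, ∀ᵐ x ∂(ρ i : Measure ℝ), x ∈ Set.Icc 0 M) :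
    ∀ᵐ x ∂(Measure.pi fun i => (ρ i : Measure ℝ)), 0 ≤ ∑ i, x i ∧ ∑ i, x i ≤ n * M := by
  filter_upwards [ae_pi_mem ρ _ hρ] with x hx
  refine ⟨sum_nonneg fun i _ => (hx i).1, ?_⟩
  calc ∑ i, x i ≤ ∑ i : Fin n, M := sum_le_sum fun i _ => (hx i).2
    _ = n * M := by simp

lemma Ph_integrable {m : ℕ} (σ : Fin m → ProbabilityMeasure ℝ) (M : ℝ)
    (hσ : ∀ i, ∀ᵐ x ∂(σ i : Measure ℝ), x ∈ Set.Icc 0 M) (x : ℝ) (hx : 0 ≤ x) :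
    Integrable (fun y : Fin m → ℝ => (1 / 2) * Real.log (1 + x + ∑ i, y i))
      (Measure.pi fun i => (σ i : Measure ℝ)) := by
  refine Integrable.of_mem_Icc 0 ((1/2) * Real.log (1 + x + m * M)) ?_ ?_
  · fun_prop
  · filter_upwards [ae_pi_sum σ M hσ] with y hy
    constructor
    · have := Real.log_nonneg (x := 1 + x + ∑ i, y i) (by linarith [hy.1])
      positivity
    · have := Real.log_le_log (x := 1 + x + ∑ i, y i) (by linarith [hy.1])
        (show _ ≤ 1 + x + m * M by linarith [hy.2])
      linarith

lemma Ph_mono {m : ℕ} (σ : Fin m → ProbabilityMeasure ℝ) (M : ℝ)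
    (hσ : ∀ i, ∀ᵐ x ∂(σ i : Measure ℝ), x ∈ Set.Icc 0 M) :
    MonotoneOn (Ph σ) (Set.Ici 0) := by
  intro x hx x' hx' hxx
  refine integral_mono_ae (Ph_integrable σ M hσ x hx) (Ph_integrable σ M hσ x' hx') ?_
  filter_upwards [ae_pi_sum σ M hσ] with y hy
  simp only [Set.mem_Ici] at hx hx'
  have := Real.log_le_log (x := 1 + x + ∑ i, y i) (by linarith [hy.1])
        (show _ ≤ 1 + x' + ∑ i, y i by linarith [hy.2])
  linarith

lemma Ph_meas {m : ℕ} (σ : Fin m → ProbabilityMeasure ℝ) : Measurable (Ph σ) := by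
  have : StronglyMeasurable (fun p : ℝ × (Fin m → ℝ) =>
      (1 / 2) * Real.log (1 + p.1 + ∑ i, p.2 i)) := by
    apply Measurable.stronglyMeasurable
    fun_prop
  exact (this.integral_prod_right (ν := Measure.pi fun i => (σ i : Measure ℝ))).measurable

lemma integrable_of_mono {Φ : ℝ → ℝ} (hm : Measurable Φ) (hΦ : MonotoneOn Φ (Set.Ici 0))
    (μ : Measure ℝ) [IsFiniteMeasure μ] (M : ℝ) (hμ : ∀ᵐ x ∂μ, x ∈ Set.Icc 0 M) :
    Integrable Φ μ := by
  refine Integrable.of_mem_Icc (Φ 0) (Φ M) hm.aemeasurable ?_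
  filter_upwards [hμ] with x hx
  exact ⟨hΦ (by simp) hx.1 hx.1, hΦ hx.1 (hx.1.trans hx.2) hx.2⟩

lemma V_eq {m : ℕ} (ρ : Fin (m + 1) → ProbabilityMeasure ℝ) (M : ℝ)
    (hρ : ∀ i, ∀ᵐ x ∂(ρ i : Measure ℝ), x ∈ Set.Icc 0 M) (i : Fin (m + 1)) :
    Vv ρ = ∫ x, Ph (fun j => ρ (i.succAbove j)) x ∂(ρ i : Measure ℝ) := by
  have mp := measurePreserving_piFinSuccAbove (fun i => (ρ i : Measure ℝ)) i
  have e : Vv ρ = ∫ p : ℝ × (Fin m → ℝ), (1 / 2) * Real.log (1 + p.1 + ∑ j, p.2 j)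
      ∂((ρ i : Measure ℝ).prod (Measure.pi fun j => (ρ (i.succAbove j) : Measure ℝ))) := by
    rw [← mp.integral_comp (MeasurableEquiv.measurableEmbedding _)]
    unfold Vv
    congr 1
    funext x
    rw [Fin.sum_univ_succAbove _ i, ← add_assoc]
    rfl
  have hint : Integrable (fun x : Fin (m+1) → ℝ => (1 / 2) * Real.log (1 + ∑ i, x i))
      (Measure.pi fun i => (ρ i : Measure ℝ)) := by
    simpa using Ph_integrable ρ M hρ 0 le_rfl
  rw [e, integral_prod]
  · rfl
  · rw [← mp.integrable_comp_emb (MeasurableEquiv.measurableEmbedding _)]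
    refine hint.congr (Filter.Eventually.of_forall fun x => ?_)
    simp only [Function.comp]
    rw [Fin.sum_univ_succAbove _ i, ← add_assoc]
    rfl

lemma V_update_le {m : ℕ} (ρ : Fin (m + 1) → ProbabilityMeasure ℝ) (M : ℝ)
    (hρ : ∀ i, ∀ᵐ x ∂(ρ i : Measure ℝ), x ∈ Set.Icc 0 M) (i : Fin (m + 1))
    (ν : ProbabilityMeasure ℝ) (hν : ∀ᵐ x ∂(ν : Measure ℝ), x ∈ Set.Icc 0 M)
    (hle : ∫ x, Ph (fun j => ρ (i.succAbove j)) x ∂(ρ i : Measure ℝ)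
      ≤ ∫ x, Ph (fun j => ρ (i.succAbove j)) x ∂(ν : Measure ℝ)) :
    Vv ρ ≤ Vv (Function.update ρ i ν) := by
  rw [V_eq ρ M hρ i, V_eq (Function.update ρ i ν) M ?_ i]
  · simpa [Fin.succAbove_ne] using hle
  · intro j
    rcases eq_or_ne j i with rfl | h
    · simpa using hν
    · simpa [h] using hρ j

/-- bad users -/
lemma bad_step {m : ℕ} (σ : Fin m → ProbabilityMeasure ℝ) (M : ℝ)
    (hσ : ∀ i, ∀ᵐ x ∂(σ i : Measure ℝ), x ∈ Set.Icc 0 M)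
    (μ ν : ProbabilityMeasure ℝ) (hμ : ∀ᵐ x ∂(μ : Measure ℝ), x ∈ Set.Icc 0 M)
    (hν : ∀ᵐ x ∂(ν : Measure ℝ), x ∈ Set.Icc 0 M)
    (hb : ∫ x, x ∂(μ : Measure ℝ) ≤ ∫ x, Real.log (1 + x) ∂(ν : Measure ℝ)) :
    ∫ x, Ph σ x ∂(μ : Measure ℝ) ≤ ∫ x, Ph σ x ∂(ν : Measure ℝ) := by
  set P := Measure.pi fun i => (σ i : Measure ℝ) with hP
  set C := ∫ y : Fin m → ℝ, (1 / 2) * (1 / (1 + ∑ i, y i)) ∂P with hC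
  have hCi : Integrable (fun y : Fin m → ℝ => (1 / 2) * (1 / (1 + ∑ i, y i))) P := by
    refine Integrable.of_mem_Icc 0 1 ?_ ?_
    · apply Measurable.aemeasurable; fun_prop
    · filter_upwards [ae_pi_sum σ M hσ] with y hy
      have : 1 / (1 + ∑ i, y i) ≤ 1 := by
        rw [div_le_one] <;> linarith [hy.1]
      have : 0 ≤ 1 / (1 + ∑ i, y i) := one_div_nonneg.2 (by linarith [hy.1])
      constructor <;> linarith
  have hC0 : 0 ≤ C := by
    apply integral_nonneg_of_ae
    filter_upwards [ae_pi_sum σ M hσ] with y hy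
    have : 0 ≤ 1 / (1 + ∑ i, y i) := one_div_nonneg.2 (by linarith [hy.1])
    simp only [Pi.zero_apply]
    linarith
  have up : ∀ x, 0 ≤ x → Ph σ x ≤ Ph σ 0 + C * x := by
    intro x hx
    have : Ph σ 0 + C * x = ∫ y : Fin m → ℝ, ((1 / 2) * Real.log (1 + 0 + ∑ i, y i)
        + (1 / 2) * (1 / (1 + ∑ i, y i)) * x) ∂P := by
      rw [integral_add (Ph_integrable σ M hσ 0 le_rfl) (hCi.mul_const x), integral_mul_const]
      rfl
    rw [this]
    refine integral_mono_ae (Ph_integrable σ M hσ x hx)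
      ((Ph_integrable σ M hσ 0 le_rfl).add (hCi.mul_const x)) ?_
    filter_upwards [ae_pi_sum σ M hσ] with y hy
    have := log_div_upper (a := 1 + ∑ i, y i) (x := x) (by linarith [hy.1]) hx
    have e : 1 + x + ∑ i, y i = 1 + ∑ i, y i + x := by ring
    rw [e, add_zero]
    linarith
  have low : ∀ x, 0 ≤ x → Ph σ 0 + C * Real.log (1 + x) ≤ Ph σ x := by
    intro x hx
    have : Ph σ 0 + C * Real.log (1 + x) = ∫ y : Fin m → ℝ, ((1 / 2) * Real.log (1 + 0 + ∑ i, y i)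
        + (1 / 2) * (1 / (1 + ∑ i, y i)) * Real.log (1 + x)) ∂P := by
      rw [integral_add (Ph_integrable σ M hσ 0 le_rfl) (hCi.mul_const _), integral_mul_const]
      rfl
    rw [this]
    refine integral_mono_ae ((Ph_integrable σ M hσ 0 le_rfl).add (hCi.mul_const _))
      (Ph_integrable σ M hσ x hx) ?_
    filter_upwards [ae_pi_sum σ M hσ] with y hy
    have := log_div_lower (a := 1 + ∑ i, y i) (x := x) (by linarith [hy.1]) hx
    have e : 1 + x + ∑ i, y i = 1 + ∑ i, y i + x := by ring
    rw [e, add_zero]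
    linarith
  have ix : Integrable (fun x : ℝ => x) (μ : Measure ℝ) :=
    integrable_of_mono (Φ := fun x => x) measurable_id (fun _ _ _ _ h => h) _ M hμ
  have il : Integrable (fun x : ℝ => Real.log (1 + x)) (ν : Measure ℝ) := by
    refine integrable_of_mono (by fun_prop) (fun x hx y _ h => ?_) _ M hν
    simp only [Set.mem_Ici] at hx
    exact Real.log_le_log (by linarith) (by linarith)
  have h1 : ∫ x, Ph σ x ∂(μ : Measure ℝ) ≤ ∫ x, (Ph σ 0 + C * x) ∂(μ : Measure ℝ) := by
    refine integral_mono_ae (integrable_of_mono (Ph_meas σ) (Ph_mono σ M hσ) _ M hμ)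
      ((integrable_const _).add (ix.const_mul C)) ?_
    filter_upwards [hμ] with x hx using up x hx.1
  have h2 : ∫ x, (Ph σ 0 + C * Real.log (1 + x)) ∂(ν : Measure ℝ) ≤ ∫ x, Ph σ x ∂(ν : Measure ℝ) := by
    refine integral_mono_ae 
      ((integrable_const _).add (il.const_mul C))
      (integrable_of_mono (Ph_meas σ) (Ph_mono σ M hσ) _ M hν) ?_
    filter_upwards [hν] with x hx using low x hx.1
  rw [integral_add (integrable_const _) (ix.const_mul C), integral_const_mul] at h1
  rw [integral_add (integrable_const _) (il.const_mul C), integral_const_mul] at h2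
  simp only [integral_const, probReal_univ, one_smul] at h1 h2
  have := mul_le_mul_of_nonneg_left hb hC0
  linarith

/-- chord condition when others are good -/
lemma good_chord {m : ℕ} (σ : Fin m → ProbabilityMeasure ℝ) (M c θ : ℝ) (hM : 0 < M) (hc : 0 < c)
    (hθ : 0 < θ) (hm : 0 < m)
    (hσ : ∀ i, ∀ᵐ x ∂(σ i : Measure ℝ), x ∈ Set.Icc 0 M)
    (hg : ∀ i, ∫ x, Real.exp (-x) ∂(σ i : Measure ℝ) ≤ Real.exp (-(2 * θ)))
    (hb : M ^ 2 * (1 / (θ * m) ^ 2 + Real.exp (-(θ * m))) ≤ c * (1 / (1 + m * M + M)))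
    (t x y : ℝ) (ht0 : 0 ≤ t) (ht1 : t ≤ 1) (hx : 0 ≤ x) (hy : 0 ≤ y) (hyM : y ≤ M)
    (hxy : x ≤ t * y - c * (t * (1 - t))) :
    Ph σ x ≤ (1 - t) * Ph σ 0 + t * Ph σ y := by
  set P := Measure.pi fun i => (σ i : Measure ℝ) with hP
  have hE : ∫ z : Fin m → ℝ, Real.exp (-∑ i, z i) ∂P ≤ Real.exp (-(2 * (θ * m))) := by
    have e : ∀ z : Fin m → ℝ, Real.exp (-∑ i, z i) = ∏ i, Real.exp (-(z i)) := by
      intro z; rw [← Real.exp_sum, Finset.sum_neg_distrib]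
    simp_rw [e]
    rw [hP, integral_fintype_prod_eq_prod (f := fun _ w => Real.exp (-w))]
    calc ∏ i, ∫ x, Real.exp (-x) ∂(σ i : Measure ℝ) ≤ ∏ i : Fin m, Real.exp (-(2 * θ)) :=
          prod_le_prod (fun i _ => integral_nonneg fun _ => (Real.exp_pos _).le) (fun i _ => hg i)
      _ = Real.exp (-(2 * (θ * m))) := by
          rw [prod_const, card_univ, Fintype.card_fin, ← Real.exp_nat_mul]; congr 1; ring
  have iE : Integrable (fun z : Fin m → ℝ => Real.exp (-∑ i, z i)) P := by
    refine Integrable.of_mem_Icc 0 1 (by fun_prop) ?_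
    filter_upwards [ae_pi_sum σ M hσ] with z hz
    exact ⟨(Real.exp_pos _).le, by rw [Real.exp_le_one_iff]; linarith [hz.1]⟩
  set b := θ * m with hbdef
  have hb0 : 0 < b := by positivity
  set A := M ^ 2 * (1 / b ^ 2) - c * (1 / (1 + m * M + M)) with hA
  have i0 := Ph_integrable σ M hσ 0 le_rfl
  have iy := Ph_integrable σ M hσ y hy
  have hs : 0 ≤ (1 / 2) * (t * (1 - t)) := by
    have := mul_nonneg ht0 (by linarith : 0 ≤ 1 - t); linarith
  have iR : Integrable (fun z : Fin m → ℝ =>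
      (1/2) * (t * (1 - t)) * (A + M ^ 2 * Real.exp b * Real.exp (-∑ i, z i))) P :=
    ((integrable_const A).add (iE.const_mul _)).const_mul _
  have h1 : Ph σ x ≤ ∫ z : Fin m → ℝ, (((1 - t) * ((1 / 2) * Real.log (1 + 0 + ∑ i, z i))
      + t * ((1 / 2) * Real.log (1 + y + ∑ i, z i)))
      + (1/2) * (t * (1 - t)) * (A + M ^ 2 * Real.exp b * Real.exp (-∑ i, z i))) ∂P := by
    refine integral_mono_ae (Ph_integrable σ M hσ x hx)
      (((i0.const_mul _).add (iy.const_mul _)).add iR) ?_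
    filter_upwards [ae_pi_sum σ M hσ] with z hz
    obtain ⟨hz0, hz1⟩ := hz
    set s := ∑ i, z i
    have k1 := log_chord_pt (a := 1 + s) (by linarith) ht0 ht1 hx hy hyM hc.le hxy
    have k2 := mul_le_mul_of_nonneg_left (inv_sq_bound hb0 hz0) (sq_nonneg M)
    have k3 : 1 / (1 + m * M + M) ≤ 1 / (1 + s + M) := by
      apply one_div_le_one_div_of_le <;> linarith
    have k4 := mul_le_mul_of_nonneg_left k3 hc.le
    have k5 : M ^ 2 * (1 / (1 + s) ^ 2) - c * (1 / (1 + s + M))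
        ≤ A + M ^ 2 * Real.exp b * Real.exp (-s) := by
      rw [hA]; linarith
    have k6 := mul_le_mul_of_nonneg_left k5 hs
    have e1 : 1 + x + s = 1 + s + x := by ring
    have e2 : 1 + y + s = 1 + s + y := by ring
    rw [e1, e2, add_zero]
    linarith
  have i2 : Integrable (fun z : Fin m → ℝ => (1 - t) * ((1 / 2) * Real.log (1 + 0 + ∑ i, z i))
      + t * ((1 / 2) * Real.log (1 + y + ∑ i, z i))) P := (i0.const_mul _).add (iy.const_mul _)
  rw [integral_add i2 iR,
    integral_add (i0.const_mul _) (iy.const_mul _), integral_const_mul (1 - t),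
    integral_const_mul t, integral_const_mul (1 / 2 * (t * (1 - t))), integral_add (integrable_const A) (iE.const_mul _),
    integral_const_mul (M ^ 2 * Real.exp b)] at h1
  simp only [integral_const, probReal_univ, one_smul] at h1
  have h2 : A + M ^ 2 * Real.exp b * ∫ z : Fin m → ℝ, Real.exp (-∑ i, z i) ∂P ≤ 0 := by
    have k := mul_le_mul_of_nonneg_left hE (by positivity : 0 ≤ M ^ 2 * Real.exp b)
    have e : M ^ 2 * Real.exp b * Real.exp (-(2 * b)) = M ^ 2 * Real.exp (-b) := by
      rw [mul_assoc, ← Real.exp_add]; congr 2; ring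
    rw [e] at k
    rw [hA]; linarith
  have h3 := mul_nonpos_of_nonneg_of_nonpos hs h2
  change Ph σ x ≤ (1 - t) * Ph σ 0 + t * Ph σ y + _ at h1
  linarith

lemma hybrid {n : ℕ} {α : Type*} (V : (Fin n → α) → ℝ) (μ ν : Fin n → α) (s : Finset (Fin n))
    (hstep : ∀ i ∈ s, ∀ ρ : Fin n → α, (∀ j, ρ j = μ j ∨ ρ j = ν j) → ρ i = μ i →
      V ρ ≤ V (Function.update ρ i (ν i))) :
    V μ ≤ V (s.piecewise ν μ) := by
  classical
  induction s using Finset.induction_on with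
  | empty => simp
  | insert i s hi ih =>
    rw [Finset.piecewise_insert]
    refine (ih fun j hj => hstep j (mem_insert_of_mem hj)).trans
      (hstep i (mem_insert_self _ _) _ (fun j => ?_) ?_)
    · by_cases hj : j ∈ s
      · right; simp [hj]
      · left; simp [hj]
    · simp [hi]

theorem core (M c ε : ℝ) (hM : 0 < M) (hc : 0 < c) (hε : 0 < ε) :
    ∃ Nstar : ℕ, 0 < Nstar ∧ ∀ n : ℕ, Nstar ≤ n → ∀ μ ν : Fin n → ProbabilityMeasure ℝ,
      (∀ i, ∀ᵐ x ∂(μ i : Measure ℝ), x ∈ Set.Icc 0 M) →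
      (∀ i, ∀ᵐ x ∂(ν i : Measure ℝ), x ∈ Set.Icc 0 M) →
      (∀ i, ε ≤ ∫ x, Real.log (1 + x) ∂(ν i : Measure ℝ)) →
      (∀ i, ∀ Φ : ℝ → ℝ, Measurable Φ → MonotoneOn Φ (Set.Ici 0) →
        (∀ t x y : ℝ, 0 ≤ t → t ≤ 1 → 0 ≤ x → 0 ≤ y → y ≤ M → x ≤ t * y - c * (t * (1 - t)) →
          Φ x ≤ (1 - t) * Φ 0 + t * Φ y) →
        ∫ x, Φ x ∂(μ i : Measure ℝ) ≤ ∫ x, Φ x ∂(ν i : Measure ℝ)) →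
      Vv μ ≤ Vv ν := by
  classical
  set r := (1 - Real.exp (-M)) / M with hr
  have hr0 : 0 < r := by
    have : Real.exp (-M) < 1 := by rw [Real.exp_lt_one_iff]; linarith
    apply div_pos <;> linarith
  obtain ⟨m0, hm0, hm⟩ := eventually_bound M c (r * ε / 2) hM hc (by positivity)
  refine ⟨m0 + 1, by omega, fun n hn μ ν hμ hν hνε hB => ?_⟩
  obtain ⟨m, rfl⟩ : ∃ m, n = m + 1 := ⟨n - 1, by omega⟩
  have hmix : ∀ ρ : Fin (m + 1) → ProbabilityMeasure ℝ, (∀ j, ρ j = μ j ∨ ρ j = ν j) →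
      ∀ j, ∀ᵐ x ∂(ρ j : Measure ℝ), x ∈ Set.Icc 0 M := by
    intro ρ h j
    rcases h j with h | h <;> rw [h]
    exacts [hμ j, hν j]
  set bad := univ.filter fun i => ∫ x, x ∂(μ i : Measure ℝ) ≤ ε with hbad
  have h1 : Vv μ ≤ Vv (bad.piecewise ν μ) := by
    refine hybrid Vv μ ν bad fun i hi ρ hρ hρi => ?_
    refine V_update_le ρ M (hmix ρ hρ) i _ (hν i) ?_
    refine bad_step _ M (fun j => hmix ρ hρ _) _ _ (hmix ρ hρ i) (hν i) ?_
    rw [hρi]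
    exact (mem_filter.1 hi).2.trans (hνε i)
  have iid : ∀ ρ : ProbabilityMeasure ℝ, (∀ᵐ x ∂(ρ : Measure ℝ), x ∈ Set.Icc 0 M) →
      Integrable (fun x : ℝ => x) (ρ : Measure ℝ) := fun ρ h =>
    integrable_of_mono (Φ := fun x => x) measurable_id (fun _ _ _ _ h => h) _ M h
  have hgood : ∀ ρ : ProbabilityMeasure ℝ, (∀ᵐ x ∂(ρ : Measure ℝ), x ∈ Set.Icc 0 M) →
      ε ≤ ∫ x, x ∂(ρ : Measure ℝ) →
      ∫ x, Real.exp (-x) ∂(ρ : Measure ℝ) ≤ Real.exp (-(2 * (r * ε / 2))) := by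
    intro ρ hρ hε'
    have ie : Integrable (fun x : ℝ => Real.exp (-x)) (ρ : Measure ℝ) := by
      refine Integrable.of_mem_Icc 0 1 (by fun_prop) ?_
      filter_upwards [hρ] with z hz
      exact ⟨(Real.exp_pos _).le, by rw [Real.exp_le_one_iff]; linarith [hz.1]⟩
    have k1 : ∫ x, Real.exp (-x) ∂(ρ : Measure ℝ) ≤ ∫ x, (1 - r * x) ∂(ρ : Measure ℝ) := by
      refine integral_mono_ae ie ((integrable_const _).sub ((iid ρ hρ).const_mul r)) ?_
      filter_upwards [hρ] with z hz using exp_chord hM hz.1 hz.2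
    rw [integral_sub (integrable_const _) ((iid ρ hρ).const_mul r), integral_const_mul] at k1
    simp only [integral_const, probReal_univ, one_smul] at k1
    have k2 := Real.add_one_le_exp (-(2 * (r * ε / 2)))
    have k3 := mul_le_mul_of_nonneg_left hε' hr0.le
    linarith
  have hνid : ∀ i, ε ≤ ∫ x, x ∂(ν i : Measure ℝ) := by
    intro i
    refine (hνε i).trans (integral_mono_ae ?_ (iid _ (hν i)) ?_)
    · refine integrable_of_mono (by fun_prop) (fun x hx y _ h => ?_) _ M (hν i)
      simp only [Set.mem_Ici] at hx
      exact Real.log_le_log (by linarith) (by linarith)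
    · filter_upwards [hν i] with x hx
      have := Real.log_le_sub_one_of_pos (x := 1 + x) (by linarith [hx.1])
      linarith
  set μ' := bad.piecewise ν μ with hμ'
  have hμ'or : ∀ j, (μ' j = μ j ∧ j ∉ bad) ∨ μ' j = ν j := by
    intro j
    by_cases hj : j ∈ bad
    · right; simp [hμ', hj]
    · left; simp [hμ', hj]
  have hμ'good : ∀ j, ε ≤ ∫ x, x ∂(μ' j : Measure ℝ) := by
    intro j
    rcases hμ'or j with ⟨h, hj⟩ | h
    · rw [h]
      simp only [hbad, mem_filter, mem_univ, true_and, not_le] at hj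
      exact hj.le
    · rw [h]; exact hνid j
  have h2 : Vv μ' ≤ Vv (univ.piecewise ν μ') := by
    refine hybrid Vv μ' ν univ fun i _ ρ hρ hρi => ?_
    have hρor : ∀ j, ρ j = μ j ∨ ρ j = ν j := by
      intro j
      rcases hρ j with h | h
      · rw [h]; exact (hμ'or j).imp (fun h => h.1) id
      · exact Or.inr h
    have hρgood : ∀ j, ε ≤ ∫ x, x ∂(ρ j : Measure ℝ) := by
      intro j
      rcases hρ j with h | h <;> rw [h]
      exacts [hμ'good j, hνid j]
    refine V_update_le ρ M (hmix ρ hρor) i _ (hν i) ?_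
    rcases hρor i with h | h
    · rw [h]
      refine hB i _ (Ph_meas _) (Ph_mono _ M fun j => hmix ρ hρor _) ?_
      intro t x y ht0 ht1 hx hy hyM hxy
      exact good_chord _ M c (r * ε / 2) hM hc (by positivity) (by omega)
        (fun j => hmix ρ hρor _) (fun j => hgood _ (hmix ρ hρor _) (hρgood _))
        (hm m (by omega)) t x y ht0 ht1 hx hy hyM hxy
    · rw [h]
  rw [Finset.piecewise_univ] at h2
  exact h1.trans h2

section law
variable {K : ℕ}

/-- Law of the received entropy power of one user. -/
noncomputable def lawM (p : Fin K → ℝ) (N : Fin K → ℝ → ℝ) (F : Fin K → ProbabilityMeasure ℝ) :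
    Measure ℝ :=
  ∑ k, ENNReal.ofReal (p k) • (F k : Measure ℝ).map (N k)

lemma lawM_prob (p : Fin K → ℝ) (hp : ∀ k, 0 ≤ p k) (hs : ∑ k, p k = 1) (N : Fin K → ℝ → ℝ)
    (hN : ∀ k, Measurable (N k)) (F : Fin K → ProbabilityMeasure ℝ) :
    IsProbabilityMeasure (lawM p N F) := by
  constructor
  unfold lawM
  rw [Measure.finsetSum_apply]
  have : ∀ k, (ENNReal.ofReal (p k) • (F k : Measure ℝ).map (N k)) Set.univ
      = ENNReal.ofReal (p k) := by
    intro k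
    rw [Measure.smul_apply, Measure.map_apply (hN k) MeasurableSet.univ]
    simp
  simp_rw [this]
  rw [← ENNReal.ofReal_sum_of_nonneg (fun k _ => hp k), hs, ENNReal.ofReal_one]

lemma lawM_ae (p : Fin K → ℝ) (N : Fin K → ℝ → ℝ)
    (hN : ∀ k, Measurable (N k)) (F : Fin K → ProbabilityMeasure ℝ) (M : ℝ)
    (hM : ∀ k g, N k g ∈ Set.Icc 0 M) : ∀ᵐ x ∂(lawM p N F), x ∈ Set.Icc 0 M := by
  unfold lawM
  rw [ae_finsetSum_measure_iff]
  intro k _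
  apply Measure.ae_smul_measure
  refine (ae_map_iff (hN k).aemeasurable (p := fun x => x ∈ Set.Icc 0 M) measurableSet_Icc).2 ?_
  exact Eventually.of_forall fun g => hM k g

lemma lawM_integral (p : Fin K → ℝ) (hp : ∀ k, 0 ≤ p k) (N : Fin K → ℝ → ℝ)
    (hN : ∀ k, Measurable (N k)) (F : Fin K → ProbabilityMeasure ℝ) (M : ℝ)
    (hM : ∀ k g, N k g ∈ Set.Icc 0 M) {Φ : ℝ → ℝ} (hm : Measurable Φ)
    (hΦ : MonotoneOn Φ (Set.Ici 0)) :
    ∫ x, Φ x ∂(lawM p N F) = ∑ k, p k * ∫ g, Φ (N k g) ∂(F k : Measure ℝ) := by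
  unfold lawM
  have hpm : ∀ k, IsProbabilityMeasure ((F k : Measure ℝ).map (N k)) := fun k =>
    Measure.isProbabilityMeasure_map (hN k).aemeasurable
  rw [integral_finsetSum_measure]
  · refine sum_congr rfl fun k _ => ?_
    rw [integral_smul_measure, ENNReal.toReal_ofReal (hp k), smul_eq_mul,
      integral_map (hN k).aemeasurable hm.aestronglyMeasurable]
  · intro k _
    refine Integrable.smul_measure ?_ ENNReal.ofReal_ne_top
    refine integrable_of_mono hm hΦ _ M ?_
    refine (ae_map_iff (hN k).aemeasurable (p := fun x => x ∈ Set.Icc 0 M) measurableSet_Icc).2 ?_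
    exact Eventually.of_forall fun g => hM k g

lemma pi_lawM {n : ℕ} (p : Fin n → Fin K → ℝ) (hp : ∀ i k, 0 ≤ p i k) (hs : ∀ i, ∑ k, p i k = 1)
    (N : Fin K → ℝ → ℝ) (hN : ∀ k, Measurable (N k)) (F : Fin n → Fin K → ProbabilityMeasure ℝ) :
    Measure.pi (fun i => lawM (p i) N (F i)) =
      ∑ κ : Fin n → Fin K, ENNReal.ofReal (∏ i, p i (κ i)) •
        (Measure.pi fun i => (F i (κ i) : Measure ℝ)).map (fun g i => N (κ i) (g i)) := by
  have : ∀ i, IsProbabilityMeasure (lawM (p i) N (F i)) := fun i =>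
    lawM_prob _ (hp i) (hs i) N hN _
  apply Measure.pi_eq
  intro s hsm
  have hpm : ∀ i k, IsProbabilityMeasure ((F i k : Measure ℝ).map (N k)) := fun i k =>
    Measure.isProbabilityMeasure_map (hN k).aemeasurable
  rw [Measure.finsetSum_apply]
  unfold lawM
  simp_rw [Measure.finsetSum_apply]
  rw [Finset.prod_univ_sum, Fintype.piFinset_univ]
  refine sum_congr rfl fun κ _ => ?_
  rw [Measure.smul_apply, Measure.pi_map_pi (fun i => (hN (κ i)).aemeasurable), Measure.pi_pi,
    ENNReal.ofReal_prod_of_nonneg (fun i _ => hp i _)]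
  simp only [Measure.smul_apply, smul_eq_mul]
  rw [prod_mul_distrib]

lemma obj_eq {n : ℕ} (p : Fin n → Fin K → ℝ) (hp : ∀ i k, 0 ≤ p i k) (hs : ∀ i, ∑ k, p i k = 1)
    (N Nf : Fin K → ℝ → ℝ) (hN : ∀ k, Measurable (N k)) (F : Fin n → Fin K → ProbabilityMeasure ℝ)
    (M : ℝ) (hM : ∀ k g, N k g ∈ Set.Icc 0 M) (S : Set ℝ) (hNN : ∀ k, ∀ g ∈ S, N k g = Nf k g)
    (hF : ∀ i k, ∀ᵐ g ∂(F i k : Measure ℝ), g ∈ S) :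
    (∑ κ : Fin n → Fin K, (∏ i, p i (κ i)) *
            ∫ g : Fin n → ℝ, (1 / 2) * Real.log (1 + ∑ i, Nf (κ i) (g i))
              ∂(Measure.pi fun i => (F i (κ i) : Measure ℝ)))
      = Vv (fun i => (⟨lawM (p i) N (F i), lawM_prob _ (hp i) (hs i) N hN _⟩ :
          ProbabilityMeasure ℝ)) := by
  unfold Vv
  simp only [ProbabilityMeasure.coe_mk]
  rw [pi_lawM p hp hs N hN F]
  have hmap : ∀ κ : Fin n → Fin K, Measurable (fun (g : Fin n → ℝ) i => N (κ i) (g i)) := by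
    intro κ
    exact measurable_pi_lambda _ fun i => (hN (κ i)).comp (measurable_pi_apply i)
  have hL : Measurable (fun x : Fin n → ℝ => (1 / 2) * Real.log (1 + ∑ i, x i)) := by fun_prop
  rw [integral_finsetSum_measure]
  · refine sum_congr rfl fun κ _ => ?_
    rw [integral_smul_measure, ENNReal.toReal_ofReal (prod_nonneg fun i _ => hp i _), smul_eq_mul,
      integral_map (hmap κ).aemeasurable hL.aestronglyMeasurable]
    congr 1
    apply integral_congr_ae
    filter_upwards [ae_pi_mem (fun i => F i (κ i)) S (fun i => hF i _)] with g hg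
    simp only [fun i => hNN (κ i) (g i) (hg i)]
  · intro κ _
    refine Integrable.smul_measure ?_ ENNReal.ofReal_ne_top
    rw [integrable_map_measure hL.aestronglyMeasurable (hmap κ).aemeasurable]
    refine Integrable.of_mem_Icc 0 ((1/2) * Real.log (1 + n * M))
      (hL.comp (hmap κ)).aemeasurable (Eventually.of_forall fun g => ?_)
    have h0 : 0 ≤ ∑ i, N (κ i) (g i) := sum_nonneg fun i _ => (hM _ _).1
    have h1 : ∑ i, N (κ i) (g i) ≤ n * M := by
      calc ∑ i, N (κ i) (g i) ≤ ∑ i : Fin n, M := sum_le_sum fun i _ => (hM _ _).2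
        _ = n * M := by simp
    constructor
    · have := Real.log_nonneg (x := 1 + ∑ i, N (κ i) (g i)) (by linarith)
      simp only [Function.comp]
      linarith
    · have := Real.log_le_log (x := 1 + ∑ i, N (κ i) (g i)) (by linarith)
        (show _ ≤ 1 + n * M by linarith)
      simp only [Function.comp]
      linarith

/-- Gap of a strictly convex function below its chord. -/
lemma convex_gap {f : ℝ → ℝ} {G : ℝ} (hG : 0 < G) (h0 : f 0 = 0)
    (hf : ConvexOn ℝ (Set.Icc 0 G) f) (t : ℝ) (ht0 : 0 ≤ t) (ht1 : t ≤ 1)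
    {c : ℝ} (hc : 0 ≤ c) (hcf : c ≤ f G - 2 * f (G / 2)) :
    f (t * G) ≤ t * f G - c * (t * (1 - t)) := by
  have mG : G ∈ Set.Icc 0 G := ⟨hG.le, le_rfl⟩
  have m0 : (0:ℝ) ∈ Set.Icc 0 G := ⟨le_rfl, hG.le⟩
  have mh : G / 2 ∈ Set.Icc 0 G := ⟨by linarith, by linarith⟩
  rcases le_total t (1 / 2) with h | h
  · have k := hf.2 m0 mh (show 0 ≤ 1 - 2 * t by linarith) (show 0 ≤ 2 * t by linarith) (by ring)
    simp only [smul_eq_mul, mul_zero, zero_add, h0] at k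
    have e : 2 * t * (G / 2) = t * G := by ring
    rw [e] at k
    have k2 := mul_le_mul_of_nonneg_left hcf ht0
    have k3 : c * (t * (1 - t)) ≤ c * t := by
      apply mul_le_mul_of_nonneg_left _ hc; nlinarith
    linarith
  · have k := hf.2 mh mG (show 0 ≤ 2 * (1 - t) by linarith) (show 0 ≤ 2 * t - 1 by linarith)
      (by ring)
    simp only [smul_eq_mul] at k
    have e : 2 * (1 - t) * (G / 2) + (2 * t - 1) * G = t * G := by ring
    rw [e] at k
    have k2 := mul_le_mul_of_nonneg_left hcf (show 0 ≤ 1 - t by linarith)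
    have k3 : c * (t * (1 - t)) ≤ c * (1 - t) := by
      apply mul_le_mul_of_nonneg_left _ hc; nlinarith
    linarith

/-- Fractional knapsack. -/
lemma knapsack (p m w d : Fin K → ℝ) (τ : Fin K) (B : ℝ) (hp : ∀ k, 0 ≤ p k)
    (hm0 : ∀ k, 0 ≤ m k) (hm1 : ∀ k, m k ≤ 1) (hd0 : ∀ k, 0 ≤ d k) (hd : Monotone d)
    (hwhi : ∀ k, τ < k → w k = 1) (hwlo : ∀ k, k < τ → w k = 0)
    (hmB : ∑ k, p k * m k ≤ B) (hwB : ∑ k, p k * w k = B) :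
    ∑ k, p k * (m k * d k) ≤ ∑ k, p k * (w k * d k) := by
  have h1 : ∀ k, p k * m k * (d k - d τ) ≤ p k * w k * (d k - d τ) := by
    intro k
    rcases lt_trichotomy k τ with h | h | h
    · have := hd h.le
      rw [hwlo k h]
      have := mul_nonneg (mul_nonneg (hp k) (hm0 k)) (sub_nonneg.2 this)
      linarith
    · rw [h]; simp
    · have := hd h.le
      rw [hwhi k h]
      have := mul_nonneg (mul_nonneg (hp k) (sub_nonneg.2 (hm1 k))) (sub_nonneg.2 this)
      linarith
  have h2 := sum_le_sum fun k (_ : k ∈ univ) => h1 k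
  simp_rw [mul_sub, sum_sub_distrib, ← sum_mul] at h2
  rw [hwB] at h2
  have h3 := mul_le_mul_of_nonneg_right hmB (hd0 τ)
  simp_rw [← mul_assoc]
  linarith


noncomputable def wt (τ : Fin K) (w : ℝ) (k : Fin K) : ℝ :=
  if τ < k then 1 else if k < τ then 0 else w

lemma wt_sum (p : Fin K → ℝ) (τ : Fin K) (w : ℝ) :
    ∑ k, p k * wt τ w k = ∑ k ∈ univ.filter (fun k : Fin K => τ < k), p k + p τ * w := by
  have : ∀ k, p k * wt τ w k = (if τ < k then p k else 0) + (if k = τ then p τ * w else 0) := by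
    intro k
    unfold wt
    rcases lt_trichotomy k τ with h | h | h
    · simp [h, h.not_gt, h.ne]
    · simp [h]
    · simp [h, h.ne']
  simp_rw [this]
  rw [sum_add_distrib, sum_filter]
  simp

lemma star_int (N : Fin K → ℝ → ℝ) (hN0 : ∀ k, N k 0 = 0) (G w : ℝ) (τ : Fin K)
    (hw0 : 0 ≤ w) (hw1 : w ≤ 1) (F : Fin K → ProbabilityMeasure ℝ)
    (hhi : ∀ k, τ < k → (F k : Measure ℝ) = Measure.dirac G)
    (hlo : ∀ k, k < τ → (F k : Measure ℝ) = Measure.dirac 0)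
    (hτ : (F τ : Measure ℝ) = ENNReal.ofReal w • Measure.dirac G +
      ENNReal.ofReal (1 - w) • Measure.dirac 0) (Φ : ℝ → ℝ) (k : Fin K) :
    ∫ g, Φ (N k g) ∂(F k : Measure ℝ) = Φ 0 + wt τ w k * (Φ (N k G) - Φ 0) := by
  unfold wt
  rcases lt_trichotomy k τ with h | h | h
  · rw [hlo k h]
    simp [h, h.not_gt, hN0]
  · subst h
    rw [hτ, integral_add_measure, integral_smul_measure, integral_smul_measure]
    · simp only [integral_dirac, hN0, ENNReal.toReal_ofReal hw0, smul_eq_mul,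
        ENNReal.toReal_ofReal (sub_nonneg.2 hw1), lt_irrefl, if_false]
      ring
    · exact Integrable.smul_measure (integrable_dirac (by simp)) ENNReal.ofReal_ne_top
    · exact Integrable.smul_measure (integrable_dirac (by simp)) ENNReal.ofReal_ne_top
  · rw [hhi k h]
    simp [h]

lemma star_supp (G w : ℝ) (hG : 0 ≤ G) (τ : Fin K) (F : Fin K → ProbabilityMeasure ℝ)
    (hhi : ∀ k, τ < k → (F k : Measure ℝ) = Measure.dirac G)
    (hlo : ∀ k, k < τ → (F k : Measure ℝ) = Measure.dirac 0)
    (hτ : (F τ : Measure ℝ) = ENNReal.ofReal w • Measure.dirac G +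
      ENNReal.ofReal (1 - w) • Measure.dirac 0) (k : Fin K) :
    ∀ᵐ g ∂(F k : Measure ℝ), g ∈ Set.Icc 0 G := by
  have dG : ∀ᵐ g ∂(Measure.dirac G), g ∈ Set.Icc 0 G := by
    rw [ae_dirac_eq]; exact ⟨hG, le_rfl⟩
  have d0 : ∀ᵐ g ∂(Measure.dirac (0:ℝ)), g ∈ Set.Icc 0 G := by
    rw [ae_dirac_eq]; exact ⟨le_rfl, hG⟩
  rcases lt_trichotomy k τ with h | h | h
  · rw [hlo k h]; exact d0
  · subst h
    rw [hτ, ae_add_measure_iff]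
    exact ⟨Measure.ae_smul_measure dG _, Measure.ae_smul_measure d0 _⟩
  · rw [hhi k h]; exact dG

end law

end InvPol

/-- main theorem: existence of an invariant optimal power allocation
policy. Let `0 = h 0 < h 1 < ⋯ < h (K-1)` be the channel gains (`K ≥ 2`),
`0 < g_min ≤ g_max`, `η ∈ (0,1)`, and let `Nf k g` be the scaled entropy power at
gain `h k` and power `g`, vanishing for `k = 0` or `g = 0`, strictly increasing,
continuous and strictly convex in `g` for `k ≥ 1`, nonnegative, and monotone in `k`.
Then there is `N* > 0`, depending only on `η, g_min, g_max, Nf` (not on the number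
of users or their statistics), such that for all `n ≥ N*`, all channel pmfs `π i`
with `π i 0 < 1 - η` and all budgets `Ḡ i` with `g_min ≤ Ḡ i` and
`0 < Ḡ i < g_max · Σ_{k ≥ 1} π i k`, the threshold policy `F*` — Dirac at `g_max`
above the threshold `τ i`, Dirac at `0` below it, and the appropriate two-point
mixture at `τ i` — maximizes the EPI sum-rate objective
`T(F) = Σ_κ (Π_i π i (κ i)) ∫ (1/2) ln(1 + Σ_i Nf (κ i) (g i)) d(Π_i F i (κ i))`
over all feasible policies, i.e. families of Borel probability measures on
`[0, g_max]` satisfying the per-user average power constraints. -/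
theorem invariant_policy_exists
    (K : ℕ) (hK : 2 ≤ K)
    (h : Fin K → ℝ)
    (hh0 : ∀ k : Fin K, k.val = 0 → h k = 0)
    (hhmono : StrictMono h)
    (gmin gmax : ℝ) (hgmin : 0 < gmin) (hgminmax : gmin ≤ gmax)
    (η : ℝ) (hη : η ∈ Set.Ioo (0 : ℝ) 1)
    (Nf : Fin K → ℝ → ℝ)
    (hNnonneg : ∀ k : Fin K, ∀ g ∈ Set.Icc 0 gmax, 0 ≤ Nf k g)
    (hN0 : ∀ k : Fin K, k.val = 0 → ∀ g : ℝ, Nf k g = 0)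
    (hNg0 : ∀ k : Fin K, Nf k 0 = 0)
    (hNmono : ∀ k : Fin K, k.val ≠ 0 → StrictMonoOn (Nf k) (Set.Icc 0 gmax))
    (hNcont : ∀ k : Fin K, k.val ≠ 0 → ContinuousOn (Nf k) (Set.Icc 0 gmax))
    (hNconv : ∀ k : Fin K, k.val ≠ 0 → StrictConvexOn ℝ (Set.Icc 0 gmax) (Nf k))
    (hNord : ∀ k k' : Fin K, k ≤ k' → ∀ g ∈ Set.Icc 0 gmax, Nf k g ≤ Nf k' g) :
    ∃ Nstar : ℕ, 0 < Nstar ∧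
      ∀ n : ℕ, Nstar ≤ n →
      ∀ (π : Fin n → Fin K → ℝ) (Gbar : Fin n → ℝ),
        (∀ i k, 0 ≤ π i k) →
        (∀ i, ∑ k, π i k = 1) →
        (∀ i, ∀ k : Fin K, k.val = 0 → π i k < 1 - η) →
        (∀ i, gmin ≤ Gbar i) →
        (∀ i, 0 < Gbar i) →
        (∀ i, Gbar i < gmax * ∑ k ∈ univ.filter (fun k : Fin K => k.val ≠ 0), π i k) →
        ∀ τ : Fin n → Fin K,
        (∀ i, gmax * ∑ k ∈ univ.filter (fun k : Fin K => τ i < k), π i k ≤ Gbar i ∧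
              Gbar i < gmax * ∑ k ∈ univ.filter (fun k : Fin K => τ i ≤ k), π i k) →
        ∀ Fstar : Fin n → Fin K → ProbabilityMeasure ℝ,
        (∀ i, ∀ k : Fin K, τ i < k → (Fstar i k : Measure ℝ) = Measure.dirac gmax) →
        (∀ i, ∀ k : Fin K, k < τ i → (Fstar i k : Measure ℝ) = Measure.dirac 0) →
        (∀ i, (Fstar i (τ i) : Measure ℝ) =
          ENNReal.ofReal
              ((Gbar i - gmax * ∑ k ∈ univ.filter (fun k : Fin K => τ i < k), π i k)
                / (gmax * π i (τ i))) • Measure.dirac gmax +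
          ENNReal.ofReal
              (1 - (Gbar i - gmax * ∑ k ∈ univ.filter (fun k : Fin K => τ i < k), π i k)
                / (gmax * π i (τ i))) • Measure.dirac 0) →
        ∀ F : Fin n → Fin K → ProbabilityMeasure ℝ,
        (∀ i k, (F i k : Measure ℝ) (Set.Icc 0 gmax) = 1) →
        (∀ i, ∑ k, π i k * ∫ g, g ∂(F i k : Measure ℝ) ≤ Gbar i) →
        (∑ κ : Fin n → Fin K, (∏ i, π i (κ i)) *
            ∫ g : Fin n → ℝ, (1 / 2) * Real.log (1 + ∑ i, Nf (κ i) (g i))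
              ∂(Measure.pi fun i => (F i (κ i) : Measure ℝ)))
          ≤
        (∑ κ : Fin n → Fin K, (∏ i, π i (κ i)) *
            ∫ g : Fin n → ℝ, (1 / 2) * Real.log (1 + ∑ i, Nf (κ i) (g i))
              ∂(Measure.pi fun i => (Fstar i (κ i) : Measure ℝ))) := by
  classical
  have hG : 0 < gmax := lt_of_lt_of_le hgmin hgminmax
  have mG : gmax ∈ Set.Icc 0 gmax := ⟨hG.le, le_rfl⟩
  have m0 : (0 : ℝ) ∈ Set.Icc 0 gmax := ⟨le_rfl, hG.le⟩
  have mh : gmax / 2 ∈ Set.Icc 0 gmax := ⟨by linarith, by linarith⟩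
  set kl : Fin K := ⟨K - 1, by omega⟩ with hkl
  set k1 : Fin K := ⟨1, by omega⟩ with hk1
  have hk1l : k1 ≤ kl := by simp only [hk1, hkl, Fin.mk_le_mk]; omega
  have hle_l : ∀ k : Fin K, k ≤ kl := by
    intro k; rw [Fin.le_def]; simp only [hkl]; omega
  have hk1pos : 0 < Nf k1 gmax := by
    have := hNmono k1 (by simp [hk1]) m0 mG hG
    rwa [hNg0] at this
  set M := Nf kl gmax with hMdef
  have hM : 0 < M := hk1pos.trans_le (hNord k1 kl hk1l gmax mG)
  -- uniform convexity gap
  obtain ⟨c, hc, hcle⟩ : ∃ c : ℝ, 0 < c ∧ ∀ k : Fin K, k.val ≠ 0 →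
      c ≤ Nf k gmax - 2 * Nf k (gmax / 2) := by
    obtain ⟨k', hk', hmin⟩ := Finset.exists_min_image
      (univ.filter fun k : Fin K => k.val ≠ 0) (fun k => Nf k gmax - 2 * Nf k (gmax / 2))
      ⟨k1, by simp [hk1]⟩
    refine ⟨_, ?_, fun k hk => hmin k (by simpa using hk)⟩
    have hk'0 : k'.val ≠ 0 := by simpa using hk'
    have := (hNconv k' hk'0).2 m0 mG hG.ne (show (0:ℝ) < 1 / 2 by norm_num)
      (show (0:ℝ) < 1 / 2 by norm_num) (by norm_num)
    simp only [smul_eq_mul, mul_zero, zero_add, hNg0] at this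
    have e : 1 / 2 * gmax = gmax / 2 := by ring
    rw [e] at this
    linarith
  have hlog1 : 0 < Real.log (1 + Nf k1 gmax) := Real.log_pos (by linarith)
  obtain ⟨Nstar, hNstar, hcore⟩ := InvPol.core M c (gmin / gmax * Real.log (1 + Nf k1 gmax)) hM hc
    (by positivity)
  refine ⟨Nstar, hNstar, ?_⟩
  intro n hn π Gbar hπ0 hπ1 hπη hGmin hGpos hGlt τ hτ Fstar hFhi hFlo hFτ F hF hFfeas
  -- clamped entropy power
  set cl : ℝ → ℝ := fun g => max 0 (min g gmax) with hcl
  have hclm : ∀ g, cl g ∈ Set.Icc 0 gmax := fun g =>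
    ⟨le_max_left _ _, max_le hG.le (min_le_right _ _)⟩
  have hclid : ∀ g ∈ Set.Icc 0 gmax, cl g = g := by
    intro g hg
    simp only [hcl]
    rw [min_eq_left hg.2, max_eq_right hg.1]
  have hclc : Continuous cl := by fun_prop
  set N : Fin K → ℝ → ℝ := fun k g => Nf k (cl g) with hN
  have hNN : ∀ k, ∀ g ∈ Set.Icc 0 gmax, N k g = Nf k g := by
    intro k g hg; simp only [hN]; rw [hclid g hg]
  have hNmeas : ∀ k, Measurable (N k) := by
    intro k
    by_cases hk : k.val = 0
    · have : N k = fun _ => 0 := by funext g; exact hN0 k hk _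
      rw [this]; exact measurable_const
    · exact ((hNcont k hk).comp_continuous hclc hclm).measurable
  have hmono : ∀ k, MonotoneOn (Nf k) (Set.Icc 0 gmax) := by
    intro k
    by_cases hk : k.val = 0
    · intro x _ y _ _; rw [hN0 k hk, hN0 k hk]
    · exact (hNmono k hk).monotoneOn
  have hNM : ∀ k g, N k g ∈ Set.Icc 0 M := fun k g =>
    ⟨hNnonneg k _ (hclm g), (hmono k (hclm g) mG (hclm g).2).trans (hNord k kl (hle_l k) _ mG)⟩
  have hNz : ∀ k, N k 0 = 0 := fun k => by rw [hNN k 0 m0, hNg0]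
  have hNGG : ∀ k, N k gmax = Nf k gmax := fun k => hNN k _ mG
  have hNGmono : Monotone fun k => N k gmax := by
    intro k k' hkk
    simp only [hNGG]
    exact hNord k k' hkk _ mG
  have hFs : ∀ i k, ∀ᵐ g ∂(F i k : Measure ℝ), g ∈ Set.Icc 0 gmax := by
    intro i k
    exact (mem_ae_iff_prob_eq_one measurableSet_Icc).2 (hF i k)
  -- the weights
  set w : Fin n → ℝ := fun i => (Gbar i - gmax * ∑ k ∈ univ.filter (fun k : Fin K => τ i < k), π i k)
                / (gmax * π i (τ i)) with hw
  have hsplit : ∀ i, ∑ k ∈ univ.filter (fun k : Fin K => τ i ≤ k), π i k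
      = π i (τ i) + ∑ k ∈ univ.filter (fun k : Fin K => τ i < k), π i k := by
    intro i
    have : univ.filter (fun k : Fin K => τ i ≤ k)
        = insert (τ i) (univ.filter (fun k : Fin K => τ i < k)) := by
      ext k; simp [le_iff_eq_or_lt, eq_comm]
    rw [this, sum_insert (by simp)]
  have hπτ : ∀ i, 0 < gmax * π i (τ i) := by
    intro i
    have := hτ i
    rw [hsplit i] at this
    linarith [this.1, this.2]
  have hw0 : ∀ i, 0 ≤ w i := fun i => div_nonneg (by linarith [(hτ i).1]) (hπτ i).le
  have hw1 : ∀ i, w i ≤ 1 := by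
    intro i
    have := (hτ i).2
    rw [hsplit i] at this
    simp only [hw]
    rw [div_le_one (hπτ i)]
    linarith
  have hwB : ∀ i, ∑ k, π i k * InvPol.wt (τ i) (w i) k = Gbar i / gmax := by
    intro i
    rw [InvPol.wt_sum]
    simp only [hw]
    have h1 := (hπτ i).ne'
    have h2 : π i (τ i) ≠ 0 := right_ne_zero_of_mul h1
    field_simp
    ring
  have hτ0 : ∀ i, (τ i).val ≠ 0 := by
    intro i h0
    have h1 := (hτ i).1
    have h2 := hGlt i
    have : univ.filter (fun k : Fin K => τ i < k) = univ.filter (fun k : Fin K => k.val ≠ 0) := by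
      ext k
      simp only [mem_filter, mem_univ, true_and, Fin.lt_def, h0]
      omega
    rw [this] at h1
    linarith
  have hSs : ∀ i k, ∀ᵐ g ∂(Fstar i k : Measure ℝ), g ∈ Set.Icc 0 gmax := fun i k =>
    InvPol.star_supp gmax (w i) hG.le (τ i) (Fstar i) (hFhi i) (hFlo i) (hFτ i) k
  have hSint : ∀ i (Φ : ℝ → ℝ) k, ∫ g, Φ (N k g) ∂(Fstar i k : Measure ℝ)
      = Φ 0 + InvPol.wt (τ i) (w i) k * (Φ (N k gmax) - Φ 0) := fun i Φ k =>
    InvPol.star_int N hNz gmax (w i) (τ i) (hw0 i) (hw1 i) (Fstar i) (hFhi i) (hFlo i) (hFτ i) Φ k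
  have hSlaw : ∀ i (Φ : ℝ → ℝ), Measurable Φ → MonotoneOn Φ (Set.Ici 0) →
      ∫ x, Φ x ∂(InvPol.lawM (π i) N (Fstar i))
        = Φ 0 + ∑ k, π i k * (InvPol.wt (τ i) (w i) k * (Φ (N k gmax) - Φ 0)) := by
    intro i Φ hm hΦ
    rw [InvPol.lawM_integral (π i) (hπ0 i) N hNmeas _ M hNM hm hΦ]
    simp_rw [hSint, mul_add, sum_add_distrib, ← sum_mul]
    rw [hπ1 i, one_mul]
  rw [InvPol.obj_eq π hπ0 hπ1 N Nf hNmeas F M hNM _ hNN hFs,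
    InvPol.obj_eq π hπ0 hπ1 N Nf hNmeas Fstar M hNM _ hNN hSs]
  refine hcore n hn _ _ (fun i => InvPol.lawM_ae _ N hNmeas _ M hNM)
    (fun i => InvPol.lawM_ae _ N hNmeas _ M hNM) ?_ ?_
  · intro i
    simp only [ProbabilityMeasure.coe_mk]
    rw [hSlaw i (fun x => Real.log (1 + x)) (by fun_prop) (fun x hx y _ hxy => by
      simp only [Set.mem_Ici] at hx
      exact Real.log_le_log (by linarith) (by linarith))]
    simp only [add_zero, Real.log_one, sub_zero, zero_add]
    have hstep : ∀ k, π i k * InvPol.wt (τ i) (w i) k * Real.log (1 + Nf k1 gmax)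
        ≤ π i k * (InvPol.wt (τ i) (w i) k * Real.log (1 + N k gmax)) := by
      intro k
      rw [mul_assoc]
      refine mul_le_mul_of_nonneg_left ?_ (hπ0 i k)
      by_cases hk : k < τ i
      · simp [InvPol.wt, hk, hk.not_gt]
      · have hwk : 0 ≤ InvPol.wt (τ i) (w i) k := by
          unfold InvPol.wt
          split_ifs <;> first | exact hw0 i | norm_num
        refine mul_le_mul_of_nonneg_left (Real.log_le_log (by linarith) ?_) hwk
        rw [hNGG]
        have hk1k : k1 ≤ k := by
          have := hτ0 i
          rw [not_lt, Fin.le_def] at hk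
          rw [Fin.le_def]; simp only [hk1]; omega
        linarith [hNord k1 k hk1k _ mG]
    calc gmin / gmax * Real.log (1 + Nf k1 gmax)
        ≤ Gbar i / gmax * Real.log (1 + Nf k1 gmax) := by
          gcongr
          exact hGmin i
      _ = ∑ k, π i k * InvPol.wt (τ i) (w i) k * Real.log (1 + Nf k1 gmax) := by
          rw [← sum_mul, hwB i]
      _ ≤ _ := sum_le_sum fun k _ => hstep k
  · intro i Φ hm hΦ hch
    simp only [ProbabilityMeasure.coe_mk]
    rw [hSlaw i Φ hm hΦ, InvPol.lawM_integral (π i) (hπ0 i) N hNmeas _ M hNM hm hΦ]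
    have igF : ∀ k, Integrable (fun g : ℝ => g) (F i k : Measure ℝ) := fun k =>
      Integrable.of_mem_Icc 0 gmax measurable_id.aemeasurable (hFs i k)
    have hpt : ∀ k, ∀ g ∈ Set.Icc 0 gmax,
        Φ (N k g) ≤ Φ 0 + (Φ (N k gmax) - Φ 0) / gmax * g := by
      intro k g hg
      by_cases hk : k.val = 0
      · have e : ∀ g, N k g = 0 := fun g => hN0 k hk _
        simp [e]
      · have ht0 : 0 ≤ g / gmax := div_nonneg hg.1 hG.le
        have ht1 : g / gmax ≤ 1 := (div_le_one hG).2 hg.2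
        have hgap := InvPol.convex_gap hG (hNg0 k) (hNconv k hk).convexOn (g / gmax) ht0 ht1 hc.le
          (hcle k hk)
        rw [div_mul_cancel₀ _ hG.ne'] at hgap
        rw [← hNN k g hg, ← hNGG] at hgap
        have := hch (g / gmax) (N k g) (N k gmax) ht0 ht1 (hNM k g).1 (hNM k gmax).1
          (hNM k gmax).2 hgap
        refine this.trans (le_of_eq ?_)
        ring
    have hint : ∀ k, ∫ g, Φ (N k g) ∂(F i k : Measure ℝ)
        ≤ Φ 0 + (∫ g, g ∂(F i k : Measure ℝ)) / gmax * (Φ (N k gmax) - Φ 0) := by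
      intro k
      have h1 : ∫ g, Φ (N k g) ∂(F i k : Measure ℝ)
          ≤ ∫ g, (Φ 0 + (Φ (N k gmax) - Φ 0) / gmax * g) ∂(F i k : Measure ℝ) := by
        refine integral_mono_ae ?_ ((integrable_const _).add ((igF k).const_mul _)) ?_
        · refine Integrable.of_mem_Icc (Φ 0) (Φ M) (hm.comp (hNmeas k)).aemeasurable
            (Filter.Eventually.of_forall fun g => ?_)
          have := hNM k g
          exact ⟨hΦ (by simp) this.1 this.1, hΦ this.1 hM.le this.2⟩
        · filter_upwards [hFs i k] with g hg using hpt k g hg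
      rw [integral_add (integrable_const _) ((igF k).const_mul _), integral_const_mul] at h1
      simp only [integral_const, probReal_univ, one_smul] at h1
      refine h1.trans (le_of_eq ?_)
      ring
    have hsum : ∑ k, π i k * ∫ g, Φ (N k g) ∂(F i k : Measure ℝ) ≤ Φ 0 +
        ∑ k, π i k * ((∫ g, g ∂(F i k : Measure ℝ)) / gmax * (Φ (N k gmax) - Φ 0)) := by
      refine (sum_le_sum fun k _ => mul_le_mul_of_nonneg_left (hint k) (hπ0 i k)).trans
        (le_of_eq ?_)
      simp_rw [mul_add, sum_add_distrib, ← sum_mul]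
      rw [hπ1 i, one_mul]
    refine hsum.trans (add_le_add le_rfl ?_)
    refine InvPol.knapsack (π i) (fun k => (∫ g, g ∂(F i k : Measure ℝ)) / gmax)
      (InvPol.wt (τ i) (w i)) (fun k => Φ (N k gmax) - Φ 0) (τ i) (Gbar i / gmax) (hπ0 i)
      ?_ ?_ ?_ ?_ ?_ ?_ ?_ (hwB i)
    · intro k
      refine div_nonneg (integral_nonneg_of_ae ?_) hG.le
      filter_upwards [hFs i k] with g hg using hg.1
    · intro k
      rw [div_le_one hG]
      have : ∫ g, g ∂(F i k : Measure ℝ) ≤ ∫ _g, gmax ∂(F i k : Measure ℝ) := by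
        refine integral_mono_ae (igF k) (integrable_const _) ?_
        filter_upwards [hFs i k] with g hg using hg.2
      simpa using this
    · intro k
      exact sub_nonneg.2 (hΦ (by simp) (hNM k gmax).1 (hNM k gmax).1)
    · intro k k' hkk
      exact sub_le_sub_right (hΦ (hNM k gmax).1 (hNM k' gmax).1 (hNGmono hkk)) _
    · intro k hk
      simp [InvPol.wt, hk]
    · intro k hk
      simp [InvPol.wt, hk, hk.not_gt]
    · simp_rw [← mul_div_assoc, ← sum_div]
      gcongr
      exact hFfeas i
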